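/- Upper enhancement via connecting paths, case p < p' (Proposition 3.2, item 1). Let (V, E, ends, α) be a finite graph with boundary condition, p ∈ (0,1), q > 0, and suppose p < p'. Let Ẽ ⊆ E be such that for every e ∈ Ẽ, the collection Γ_{E∖Ẽ}(e) is nonempty (there is a path included in E∖Ẽ connecting the two endpoints of e). For e ∈ Ẽ set ε̃_e := (p'−p) · P_{min(p,p')}({ω : ∃ γ ∈ Γ_{E∖Ẽ}(e) with every edge of γ open in ω}), and set ε̃_e := 0 for e ∉ Ẽ. Then φ^α_{G,p,q} ≼ P_{(p'−ε̃_e)_{e∈E}}. -/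

import Mathlib

open scoped Classical

noncomputable section

namespace FKPaper

variable {V E : Type*}

/-- One-step adjacency between wired vertices through an edge in `F`. -/
def Step (ends : E → Sym2 V) (α : Setoid V) (F : Set E) (x y : Quotient α) : Prop :=
  ∃ e ∈ F, Sym2.map (Quotient.mk α) (ends e) = s(x, y)

/-- Setoid of connected components of the wired multigraph with edge set `F`. -/
def connSetoid (ends : E → Sym2 V) (α : Setoid V) (F : Set E) : Setoid (Quotient α) :=
  Relation.EqvGen.setoid (Step ends α F)

/-- Connectivity in the wired multigraph with edge set `F`. -/
def Conn (ends : E → Sym2 V) (α : Setoid V) (F : Set E) (x y : Quotient α) : Prop :=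
  (connSetoid ends α F).r x y

/-- The two endpoints of `e` are joined in the wired multigraph with edge set `F`. -/
def EndsConn (ends : E → Sym2 V) (α : Setoid V) (F : Set E) (e : E) : Prop :=
  ∀ x y : V, ends e = s(x, y) → Conn ends α F (Quotient.mk α x) (Quotient.mk α y)

/-- Number of connected components `k(ω, α)`. -/
def numComponents (ends : E → Sym2 V) (α : Setoid V) (ω : E → Bool) : ℕ :=
  Nat.card (Quotient (connSetoid ends α {e | ω e = true}))

/-- `p' = p / (p + q (1 - p))`. -/
def pPrime (p q : ℝ) : ℝ := p / (p + q * (1 - p))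

/-- Total mass of a set under a weight function. -/
def massOf {ι : Type*} [Fintype ι] (w : ι → ℝ) (A : Set ι) : ℝ :=
  ∑ x ∈ Finset.univ.filter (· ∈ A), w x

/-- Normalized probability of a set under a weight function. -/
def probOf {ι : Type*} [Fintype ι] (w : ι → ℝ) (A : Set ι) : ℝ :=
  massOf w A / massOf w Set.univ

/-- FK weight of a configuration. -/
def fkWeight [Fintype E] (ends : E → Sym2 V) (α : Setoid V) (p q : ℝ) (ω : E → Bool) : ℝ :=
  p ^ (Finset.univ.filter fun e => ω e = true).card *
    (1 - p) ^ (Finset.univ.filter fun e => ω e = false).card *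
    q ^ numComponents ends α ω

/-- The FK (random cluster) probability measure `φ^α_{G,p,q}`. -/
def fkProb [Fintype E] (ends : E → Sym2 V) (α : Setoid V) (p q : ℝ)
    (A : Set (E → Bool)) : ℝ :=
  probOf (fkWeight ends α p q) A

/-- Inhomogeneous Bernoulli weight. -/
def berWeight [Fintype E] (pe : E → ℝ) (ω : E → Bool) : ℝ :=
  ∏ e, if ω e = true then pe e else 1 - pe e

/-- Inhomogeneous Bernoulli product measure `P_{(p_e)}`. -/
def berProb [Fintype E] (pe : E → ℝ) (A : Set (E → Bool)) : ℝ :=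
  probOf (berWeight pe) A

/-- Increasing sets of configurations. -/
def Increasing (A : Set (E → Bool)) : Prop :=
  ∀ ⦃ω ω' : E → Bool⦄, ω ∈ A → (∀ e, ω e ≤ ω' e) → ω' ∈ A

/-- Stochastic domination `μ ≼ ν`. -/
def StochDom [Fintype E] (μ ν : Set (E → Bool) → ℝ) : Prop :=
  ∀ A : Set (E → Bool), Increasing A → μ A ≤ ν A

/-- `Q_F(e)`: cutsets for `e` included in `F`. -/
def Cutsets (ends : E → Sym2 V) (α : Setoid V) (F : Set E) (e : E) : Set (Set E) :=
  {χ | χ ⊆ F ∧ ¬ EndsConn ends α {e' | e' ∉ χ ∧ e' ≠ e} e}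


/-! ### Connectivity facts -/

lemma conn_mono (ends : E → Sym2 V) (α : Setoid V) {F F' : Set E} (h : F ⊆ F')
    {x y : Quotient α} (hc : Conn ends α F x y) : Conn ends α F' x y := by
  change Relation.EqvGen _ x y at hc
  induction hc with
  | rel a b hab =>
    obtain ⟨e, he, hab⟩ := hab
    exact Relation.EqvGen.rel _ _ ⟨e, h he, hab⟩
  | refl a => exact Relation.EqvGen.refl a
  | symm a b _ ih => exact Relation.EqvGen.symm _ _ ih
  | trans a b c _ _ ih1 ih2 => exact Relation.EqvGen.trans _ _ _ ih1 ih2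

lemma endsConn_mono (ends : E → Sym2 V) (α : Setoid V) {F F' : Set E} (h : F ⊆ F')
    {e : E} (hc : EndsConn ends α F e) : EndsConn ends α F' e :=
  fun x y hxy => conn_mono ends α h (hc x y hxy)

/-- Adding one edge `e` with endpoints `x, y`. -/
lemma conn_insert (ends : E → Sym2 V) (α : Setoid V) (F : Set E) (e : E) (x y : V)
    (hxy : ends e = s(x, y)) {a b : Quotient α} (h : Conn ends α (insert e F) a b) :
    Conn ends α F a b ∨
      (Conn ends α F a (Quotient.mk α x) ∧ Conn ends α F (Quotient.mk α y) b) ∨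
      (Conn ends α F a (Quotient.mk α y) ∧ Conn ends α F (Quotient.mk α x) b) := by
  have rf : ∀ a, Conn ends α F a a := fun a => (connSetoid ends α F).refl a
  have sy : ∀ {a b}, Conn ends α F a b → Conn ends α F b a :=
    fun h => (connSetoid ends α F).symm h
  have tr : ∀ {a b c}, Conn ends α F a b → Conn ends α F b c → Conn ends α F a c :=
    fun h h' => (connSetoid ends α F).trans h h'
  change Relation.EqvGen _ a b at h
  induction h with
  | rel a b hab =>
    obtain ⟨e', he', hab⟩ := hab
    rcases he' with rfl | he'
    · rw [hxy, Sym2.map_mk, Sym2.eq_iff] at hab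
      rcases hab with ⟨h1, h2⟩ | ⟨h1, h2⟩
      · right; left; rw [← h1, ← h2]; exact ⟨rf _, rf _⟩
      · right; right; rw [← h1, ← h2]; exact ⟨rf _, rf _⟩
    · left; exact Relation.EqvGen.rel _ _ ⟨e', he', hab⟩
  | refl a => left; exact rf a
  | symm a b _ ih =>
    rcases ih with h | ⟨h, h'⟩ | ⟨h, h'⟩
    · left; exact sy h
    · right; right; exact ⟨sy h', sy h⟩
    · right; left; exact ⟨sy h', sy h⟩
  | trans a b c _ _ ih1 ih2 =>
    rcases ih1 with h | ⟨h, h'⟩ | ⟨h, h'⟩ <;> rcases ih2 with k | ⟨k, k'⟩ | ⟨k, k'⟩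
    · left; exact tr h k
    · right; left; exact ⟨tr h k, k'⟩
    · right; right; exact ⟨tr h k, k'⟩
    · right; left; exact ⟨h, tr h' k⟩
    · right; left; exact ⟨h, k'⟩
    · left; exact tr h k'
    · right; right; exact ⟨h, tr h' k⟩
    · left; exact tr h k'
    · right; right; exact ⟨h, k'⟩

lemma open_update_true (ω : E → Bool) (e : E) :
    {e' | Function.update ω e true e' = true} =
      insert e {e' | Function.update ω e false e' = true} := by
  ext e'
  by_cases h : e' = e
  · subst h; simp
  · simp [Function.update_of_ne h, h]

lemma card_quot_le [Finite V] (ends : E → Sym2 V) (α : Setoid V) {F F' : Set E} (h : F ⊆ F') :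
    Nat.card (Quotient (connSetoid ends α F')) ≤ Nat.card (Quotient (connSetoid ends α F)) := by
  refine Nat.card_le_card_of_surjective
    (Quotient.map' (s₁ := connSetoid ends α F) (s₂ := connSetoid ends α F') id
      fun a b hab => conn_mono ends α h hab) ?_
  intro c
  induction c using Quotient.inductionOn' with
  | h a => exact ⟨Quotient.mk'' a, rfl⟩

lemma card_quot_insert [Finite V] (ends : E → Sym2 V) (α : Setoid V) (F : Set E) (e : E) :
    Nat.card (Quotient (connSetoid ends α F)) ≤
      Nat.card (Quotient (connSetoid ends α (insert e F))) + 1 := by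
  obtain ⟨x, y, hxy⟩ : ∃ x y, ends e = s(x, y) := by
    induction h : ends e using Sym2.ind with
    | _ x y => exact ⟨x, y, rfl⟩
  have rf : ∀ a, Conn ends α F a a := fun a => (connSetoid ends α F).refl a
  have sy : ∀ {a b}, Conn ends α F a b → Conn ends α F b a :=
    fun h => (connSetoid ends α F).symm h
  let m : Quotient (connSetoid ends α F) → Quotient (connSetoid ends α (insert e F)) :=
    Quotient.map' id fun a b hab => conn_mono ends α (Set.subset_insert e F) hab
  let y0 : Quotient (connSetoid ends α F) := Quotient.mk'' (Quotient.mk α y)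
  let g : Quotient (connSetoid ends α F) → Option (Quotient (connSetoid ends α (insert e F))) :=
    fun c => if c = y0 then none else some (m c)
  rw [← Finite.card_option]
  refine Nat.card_le_card_of_injective g ?_
  intro c d hcd
  simp only [g] at hcd
  by_cases hc : c = y0 <;> by_cases hd : d = y0
  · rw [hc, hd]
  · simp [hc, hd] at hcd
  · simp [hc, hd] at hcd
  · rw [if_neg hc, if_neg hd, Option.some_inj] at hcd
    induction c using Quotient.inductionOn' with
    | h a =>
    induction d using Quotient.inductionOn' with
    | h b =>
    have hab : Conn ends α (insert e F) a b := Quotient.exact hcd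
    rcases conn_insert ends α F e x y hxy hab with h | ⟨h, h'⟩ | ⟨h, h'⟩
    · exact Quotient.sound h
    · exact absurd (Quotient.sound (sy h')) hd
    · exact absurd (Quotient.sound h) hc

lemma numComponents_le [Finite V] (ends : E → Sym2 V) (α : Setoid V) (ω : E → Bool) (e : E) :
    numComponents ends α (Function.update ω e true) ≤
      numComponents ends α (Function.update ω e false) := by
  unfold numComponents
  rw [open_update_true]
  exact card_quot_le ends α (Set.subset_insert _ _)

lemma numComponents_le_succ [Finite V] (ends : E → Sym2 V) (α : Setoid V) (ω : E → Bool) (e : E) :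
    numComponents ends α (Function.update ω e false) ≤
      numComponents ends α (Function.update ω e true) + 1 := by
  unfold numComponents
  rw [open_update_true]
  exact card_quot_insert ends α _ e

lemma numComponents_eq (ends : E → Sym2 V) (α : Setoid V) (ω : E → Bool) (e : E)
    (h : EndsConn ends α {e' | Function.update ω e false e' = true} e) :
    numComponents ends α (Function.update ω e false) =
      numComponents ends α (Function.update ω e true) := by
  unfold numComponents
  rw [open_update_true]
  set F := {e' | Function.update ω e false e' = true}
  have : connSetoid ends α F = connSetoid ends α (insert e F) := by
    refine Setoid.ext fun a b => ⟨fun hab => conn_mono ends α (Set.subset_insert _ _) hab,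
      fun hab => ?_⟩
    obtain ⟨x, y, hxy⟩ : ∃ x y, ends e = s(x, y) := by
      induction h : ends e using Sym2.ind with
      | _ x y => exact ⟨x, y, rfl⟩
    have hc := h x y hxy
    have tr : ∀ {a b c}, Conn ends α F a b → Conn ends α F b c → Conn ends α F a c :=
      fun h h' => (connSetoid ends α F).trans h h'
    rcases conn_insert ends α F e x y hxy hab with h | ⟨h, h'⟩ | ⟨h, h'⟩
    · exact h
    · exact tr h (tr hc h')
    · exact tr h (tr ((connSetoid ends α F).symm hc) h')
  rw [this]

/-! ### The FK weight on a pair of configurations differing at one edge -/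

lemma fkWeight_pair [Fintype E] (ends : E → Sym2 V) (α : Setoid V) (p q : ℝ)
    (hp0 : 0 < p) (hp1 : p < 1) (ω : E → Bool) (e : E) :
    ∃ X : ℝ, 0 < X ∧
      fkWeight ends α p q (Function.update ω e true) =
        X * p * q ^ numComponents ends α (Function.update ω e true) ∧
      fkWeight ends α p q (Function.update ω e false) =
        X * (1 - p) * q ^ numComponents ends α (Function.update ω e false) := by
  have key : ∀ η : E → Bool, p ^ (Finset.univ.filter fun e => η e = true).card *
      (1 - p) ^ (Finset.univ.filter fun e => η e = false).card =
      ∏ e, if η e = true then p else 1 - p := by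
    intro η
    rw [Finset.prod_ite, Finset.prod_const, Finset.prod_const]
    simp
  refine ⟨∏ e' ∈ Finset.univ.erase e, if ω e' = true then p else 1 - p, ?_, ?_, ?_⟩
  · refine Finset.prod_pos fun e' _ => ?_
    split_ifs <;> linarith
  all_goals
    unfold fkWeight
    rw [key, ← Finset.prod_erase_mul _ _ (Finset.mem_univ e)]
    congr 2
    · refine Finset.prod_congr rfl fun e' he' => ?_
      rw [Function.update_of_ne (Finset.ne_of_mem_erase he')]
    · simp

lemma fkWeight_pos [Fintype E] (ends : E → Sym2 V) (α : Setoid V) (p q : ℝ)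
    (hp0 : 0 < p) (hp1 : p < 1) (hq : 0 < q) (ω : E → Bool) : 0 < fkWeight ends α p q ω := by
  have : 0 < 1 - p := by linarith
  unfold fkWeight
  positivity

lemma fk_lower [Finite V] [Fintype E] (ends : E → Sym2 V) (α : Setoid V) (p q : ℝ)
    (hp0 : 0 < p) (hp1 : p < 1) (hq : 0 < q) (hq1 : q < 1) (ω : E → Bool) (e : E) :
    p * fkWeight ends α p q (Function.update ω e false) ≤
      (1 - p) * fkWeight ends α p q (Function.update ω e true) := by
  obtain ⟨X, hX, h1, h0⟩ := fkWeight_pair ends α p q hp0 hp1 ω e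
  rw [h1, h0]
  have := pow_le_pow_of_le_one hq.le hq1.le (numComponents_le ends α ω e)
  have h1p : 0 < 1 - p := by linarith
  have h2 := mul_le_mul_of_nonneg_left this (by positivity : 0 ≤ X * p * (1 - p))
  linarith

lemma fk_conn [Fintype E] (ends : E → Sym2 V) (α : Setoid V) (p q : ℝ)
    (hp0 : 0 < p) (hp1 : p < 1) (ω : E → Bool) (e : E)
    (h : EndsConn ends α {e' | Function.update ω e false e' = true} e) :
    (1 - p) * fkWeight ends α p q (Function.update ω e true) =
      p * fkWeight ends α p q (Function.update ω e false) := by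
  obtain ⟨X, hX, h1, h0⟩ := fkWeight_pair ends α p q hp0 hp1 ω e
  rw [h1, h0, numComponents_eq ends α ω e h]
  ring

lemma fk_upper [Finite V] [Fintype E] (ends : E → Sym2 V) (α : Setoid V) (p q : ℝ)
    (hp0 : 0 < p) (hp1 : p < 1) (hq : 0 < q) (hq1 : q < 1) (ω : E → Bool) (e : E) :
    (1 - pPrime p q) * fkWeight ends α p q (Function.update ω e true) ≤
      pPrime p q * fkWeight ends α p q (Function.update ω e false) := by
  obtain ⟨X, hX, h1, h0⟩ := fkWeight_pair ends α p q hp0 hp1 ω e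
  rw [h1, h0]
  have := pow_le_pow_of_le_one hq.le hq1.le (numComponents_le_succ ends α ω e)
  have h1p : 0 < 1 - p := by linarith
  have hd : 0 < p + q * (1 - p) := by positivity
  have e1 : 1 - pPrime p q = q * (1 - p) / (p + q * (1 - p)) := by
    unfold pPrime; field_simp; ring
  rw [e1]
  unfold pPrime
  rw [div_mul_eq_mul_div, div_mul_eq_mul_div]
  refine div_le_div_of_nonneg_right ?_ hd.le
  rw [pow_succ] at this
  have h2 := mul_le_mul_of_nonneg_left this (by positivity : 0 ≤ X * p * (1 - p))
  linarith

/-! ### Resampling operators -/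

/-- Resample edge `e` with probability `r`. -/
def resample (r : ℝ) (e : E) (f : (E → Bool) → ℝ) (ω : E → Bool) : ℝ :=
  r * f (Function.update ω e true) + (1 - r) * f (Function.update ω e false)

/-- Resample all the edges of a list. -/
def resampleList (r : E → ℝ) (l : List E) (f : (E → Bool) → ℝ) : (E → Bool) → ℝ :=
  l.foldr (fun e g => resample (r e) e g) f

/-- `f` only depends on the coordinates in `S`. -/
def DepOn (S : Set E) (f : (E → Bool) → ℝ) : Prop :=
  ∀ ω η : E → Bool, (∀ e ∈ S, ω e = η e) → f ω = f η

lemma sum_le_of_pair [Fintype E] (e : E) (F G : (E → Bool) → ℝ)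
    (h : ∀ ω, F (Function.update ω e true) + F (Function.update ω e false) ≤
      G (Function.update ω e true) + G (Function.update ω e false)) :
    ∑ ω, F ω ≤ ∑ ω, G ω := by
  have key : ∀ F : (E → Bool) → ℝ, 2 * ∑ ω, F ω =
      ∑ ω, (F (Function.update ω e true) + F (Function.update ω e false)) := by
    intro F
    have hinv : Function.Involutive fun ω : E → Bool => Function.update ω e (!ω e) := by
      intro ω; simp
    have h1 : ∑ ω, F (Function.update ω e (!ω e)) = ∑ ω, F ω :=
      Equiv.sum_comp (hinv.toPerm _) F
    rw [two_mul]
    nth_rewrite 2 [← h1]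
    rw [← Finset.sum_add_distrib]
    refine Finset.sum_congr rfl fun ω _ => ?_
    cases hω : ω e
    · have : Function.update ω e false = ω := by rw [← hω]; simp
      rw [this]; simp [add_comm]
    · have : Function.update ω e true = ω := by rw [← hω]; simp
      rw [this]; simp
  have h2 : ∑ ω, (F (Function.update ω e true) + F (Function.update ω e false)) ≤
      ∑ ω, (G (Function.update ω e true) + G (Function.update ω e false)) :=
    Finset.sum_le_sum fun ω _ => h ω
  rw [← key, ← key] at h2
  linarith

lemma update_le_update (ω η : E → Bool) (e : E) (h : ω ≤ η) {b c : Bool} (hb : b ≤ c) :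
    Function.update ω e b ≤ Function.update η e c := by
  intro e'
  by_cases hh : e' = e
  · subst hh; simpa using hb
  · rw [Function.update_of_ne hh, Function.update_of_ne hh]; exact h e'

lemma resample_mono {r : ℝ} (h0 : 0 ≤ r) (h1 : r ≤ 1) (e : E) {f : (E → Bool) → ℝ}
    (hf : Monotone f) : Monotone (resample r e f) := by
  intro ω η h
  have : ∀ b, f (Function.update ω e b) ≤ f (Function.update η e b) := fun b => by
    apply hf
    exact update_le_update ω η e h le_rfl
  unfold resample
  have a := mul_le_mul_of_nonneg_left (this true) h0
  have b := mul_le_mul_of_nonneg_left (this false) (sub_nonneg.2 h1)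
  linarith

lemma resample_dep (r : ℝ) (e : E) {S : Set E} {f : (E → Bool) → ℝ}
    (hf : DepOn S f) : DepOn (S \ {e}) (resample r e f) := by
  intro ω η h
  have : ∀ b, f (Function.update ω e b) = f (Function.update η e b) := fun b => by
    apply hf
    intro e' he'
    by_cases hh : e' = e
    · subst hh; simp
    · rw [Function.update_of_ne hh, Function.update_of_ne hh]
      exact h e' ⟨he', hh⟩
  unfold resample
  rw [this, this]

lemma DepOn.mono {S S' : Set E} (h : S ⊆ S') {f : (E → Bool) → ℝ} (hf : DepOn S f) :
    DepOn S' f := fun ω η hh => hf ω η fun e he => hh e (h he)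

lemma resampleList_dep (r : E → ℝ) (l : List E) {S : Set E} {f : (E → Bool) → ℝ}
    (hf : DepOn S f) : DepOn (S \ {e | e ∈ l}) (resampleList r l f) := by
  induction l with
  | nil => exact hf.mono (by simp)
  | cons e l ih =>
    refine (resample_dep (r e) e ih).mono ?_
    rintro e' ⟨⟨h1, h2⟩, h3⟩
    refine ⟨h1, ?_⟩
    simp at h2 h3 ⊢
    exact ⟨h3, h2⟩

lemma resampleList_mono {r : E → ℝ} (h0 : ∀ e, 0 ≤ r e) (h1 : ∀ e, r e ≤ 1) (l : List E)
    {f : (E → Bool) → ℝ} (hf : Monotone f) : Monotone (resampleList r l f) := by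
  induction l with
  | nil => exact hf
  | cons e l ih => exact resample_mono (h0 e) (h1 e) e ih

/-- Iterate a one-edge inequality along a list. -/
lemma resampleList_le {r : E → ℝ} (h0 : ∀ e, 0 ≤ r e) (h1 : ∀ e, r e ≤ 1) (S : Set E)
    (L : ((E → Bool) → ℝ) → ℝ) (l : List E)
    (hL : ∀ e ∈ l, ∀ f, Monotone f → DepOn S f → L f ≤ L (resample (r e) e f))
    {f : (E → Bool) → ℝ} (hf : Monotone f) (hS : DepOn S f) :
    L f ≤ L (resampleList r l f) := by
  induction l with
  | nil => exact le_rfl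
  | cons e l ih =>
    refine (ih fun e' he' => hL e' (List.mem_cons_of_mem _ he')).trans ?_
    exact hL e List.mem_cons_self _ (resampleList_mono h0 h1 l hf)
      ((resampleList_dep r l hS).mono Set.sdiff_subset)

lemma berWeight_pair [Fintype E] (r : E → ℝ) (ω : E → Bool) (e : E) :
    (1 - r e) * berWeight r (Function.update ω e true) =
      r e * berWeight r (Function.update ω e false) := by
  unfold berWeight
  rw [← Finset.prod_erase_mul _ _ (Finset.mem_univ e),
    ← Finset.prod_erase_mul (a := e) _ _ (Finset.mem_univ e)]
  have : ∀ b, ∏ x ∈ Finset.univ.erase e, (if Function.update ω e b x = true then r x else 1 - r x)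
      = ∏ x ∈ Finset.univ.erase e, (if ω x = true then r x else 1 - r x) := fun b =>
    Finset.prod_congr rfl fun e' he' => by
      rw [Function.update_of_ne (Finset.ne_of_mem_erase he')]
  rw [this, this]
  simp
  ring

lemma ber_resample [Fintype E] (r : E → ℝ) (e : E) (f : (E → Bool) → ℝ) :
    ∑ ω, berWeight r ω * f ω = ∑ ω, berWeight r ω * resample (r e) e f ω := by
  have h := fun ω => berWeight_pair r ω e
  apply le_antisymm
  · refine sum_le_of_pair e _ _ fun ω => le_of_eq ?_
    simp only [resample, Function.update_idem]
    linear_combination (f (Function.update ω e true) - f (Function.update ω e false)) * h ω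
  · refine sum_le_of_pair e _ _ fun ω => le_of_eq ?_
    simp only [resample, Function.update_idem]
    linear_combination -(f (Function.update ω e true) - f (Function.update ω e false)) * h ω

lemma ber_resampleList [Fintype E] (r : E → ℝ) (l : List E) (f : (E → Bool) → ℝ) :
    ∑ ω, berWeight r ω * f ω = ∑ ω, berWeight r ω * resampleList r l f ω := by
  induction l with
  | nil => rfl
  | cons e l ih => rw [ih, ber_resample r e]; rfl

lemma massOf_eq {ι : Type*} [Fintype ι] (w : ι → ℝ) (A : Set ι) :
    massOf w A = ∑ x, w x * A.indicator (fun _ => (1 : ℝ)) x := by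
  unfold massOf
  rw [Finset.sum_filter]
  refine Finset.sum_congr rfl fun x _ => ?_
  simp [Set.indicator_apply]

lemma massOf_univ_pos [Fintype E] {w : (E → Bool) → ℝ} (hw : ∀ ω, 0 < w ω) :
    0 < massOf w Set.univ := by
  unfold massOf
  exact Finset.sum_pos (fun ω _ => hw ω) ⟨fun _ => true, by simp⟩

lemma berWeight_pos [Fintype E] {r : E → ℝ} (h0 : ∀ e, 0 < r e) (h1 : ∀ e, r e < 1)
    (ω : E → Bool) : 0 < berWeight r ω := by
  unfold berWeight
  refine Finset.prod_pos fun e _ => ?_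
  split_ifs
  · exact h0 e
  · linarith [h1 e]

/-- If resampling yields a constant, this constant is the Bernoulli probability. -/
lemma berProb_eq [Fintype E] {r : E → ℝ} (h0 : ∀ e, 0 < r e) (h1 : ∀ e, r e < 1)
    (A : Set (E → Bool))
    {g : (E → Bool) → ℝ}
    (hg : ∑ ω, berWeight r ω * A.indicator (fun _ => (1 : ℝ)) ω = ∑ ω, berWeight r ω * g ω)
    (hc : DepOn ∅ g) (ω₀ : E → Bool) : g ω₀ = berProb r A := by
  unfold berProb probOf
  rw [eq_div_iff (massOf_univ_pos (berWeight_pos h0 h1)).ne', massOf_eq _ A, hg]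
  unfold massOf
  simp only [Set.mem_univ, Finset.filter_true]
  rw [Finset.mul_sum]
  refine Finset.sum_congr rfl fun ω _ => ?_
  rw [hc ω ω₀ (by simp)]; ring

lemma indicator_monotone {A : Set (E → Bool)} (hA : Increasing A) :
    Monotone (A.indicator fun _ => (1 : ℝ)) := by
  intro ω η h
  by_cases h1 : ω ∈ A
  · have h2 : η ∈ A := hA h1 h
    simp [h1, h2]
  · simp only [Set.indicator_of_notMem h1]
    exact Set.indicator_nonneg (fun _ _ => zero_le_one) _

/-- Lower bound: conditionally on `Fᶜ`, the FK measure dominates Bernoulli `p` on `F`. -/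
lemma fk_lower_cond [Finite V] [Fintype E] (ends : E → Sym2 V) (α : Setoid V) (p q : ℝ)
    (hp0 : 0 < p) (hp1 : p < 1) (hq : 0 < q) (hq1 : q < 1) (F : Set E)
    (g : (E → Bool) → ℝ) (hg0 : ∀ ω, 0 ≤ g ω) (hg : DepOn Fᶜ g)
    (A : Set (E → Bool)) (hA : Increasing A) (hAF : DepOn F (A.indicator fun _ => (1 : ℝ))) :
    berProb (fun _ => p) A * ∑ ω, fkWeight ends α p q ω * g ω ≤
      ∑ ω, fkWeight ends α p q ω * (g ω * A.indicator (fun _ => (1 : ℝ)) ω) := by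
  set h := A.indicator fun _ => (1 : ℝ)
  let l : List E := (Finset.univ.filter (· ∈ F)).toList
  have hl : ∀ e, e ∈ l ↔ e ∈ F := by intro e; simp [l]
  have hmain := resampleList_le (r := fun _ : E => p) (fun _ => hp0.le) (fun _ => hp1.le) F
    (fun f => - ∑ ω, fkWeight ends α p q ω * (g ω * f ω)) l ?_
    (indicator_monotone hA) hAF
  · have hdep : DepOn ∅ (resampleList (fun _ : E => p) l h) :=
      (resampleList_dep _ l hAF).mono (by rintro e ⟨h1, h2⟩; exact h2 ((hl e).2 h1))
    have hc := berProb_eq (fun _ => hp0) (fun _ => hp1) A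
      (ber_resampleList (fun _ => p) l h) hdep
    have h3 := neg_le_neg_iff.1 hmain
    refine le_trans (le_of_eq ?_) h3
    rw [Finset.mul_sum]
    refine Finset.sum_congr rfl fun ω _ => ?_
    rw [hc]; ring
  · intro e he f hf _
    refine neg_le_neg (sum_le_of_pair e _ _ fun ω => ?_)
    have hge : ∀ b, g (Function.update ω e b) = g ω := fun b => by
      refine hg _ _ fun e' he' => ?_
      rw [Function.update_of_ne]
      rintro rfl
      exact he' ((hl _).1 he)
    simp only [resample, Function.update_idem, hge]
    have hfm : f (Function.update ω e false) ≤ f (Function.update ω e true) :=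
      hf (update_le_update ω ω e le_rfl (by simp))
    have h2 := fk_lower ends α p q hp0 hp1 hq hq1 ω e
    have h3 := mul_nonneg (mul_nonneg (hg0 ω) (sub_nonneg.2 hfm)) (sub_nonneg.2 h2)
    linarith

/-- **Proposition 3.2, item 1** (upper enhancement via connecting paths, case `p < p'`).
`Γ_{E∖Ẽ}(e)` being nonempty is expressed as: the endpoints of `e` are joined in the wired
multigraph using only edges of `E ∖ Ẽ`; the event that some path of `Γ_{E∖Ẽ}(e)` is open in `ω`
is expressed as: the endpoints of `e` are joined using only edges of `E ∖ Ẽ` that are open. -/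
theorem above_enhancement_of_lt_paths
    {V E : Type*} [Fintype V] [Fintype E]
    (ends : E → Sym2 V) (α : Setoid V)
    (p q : ℝ) (hp : p ∈ Set.Ioo (0 : ℝ) 1) (hq : 0 < q)
    (hpp' : p < pPrime p q)
    (Etilde : Set E)
    (hpath : ∀ e ∈ Etilde, EndsConn ends α Etildeᶜ e)
    (εtilde : E → ℝ)
    (hε : ∀ e, εtilde e =
      if e ∈ Etilde then
        (pPrime p q - p) *
          berProb (fun _ => min p (pPrime p q))
            {ω | EndsConn ends α (Etildeᶜ ∩ {e' | ω e' = true}) e}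
      else 0) :
    StochDom (fkProb ends α p q) (berProb fun e => pPrime p q - εtilde e) := by
  obtain ⟨hp0, hp1⟩ := hp
  have h1p : 0 < 1 - p := by linarith
  have hd : 0 < p + q * (1 - p) := by positivity
  have hq1 : q < 1 := by
    unfold pPrime at hpp'
    rw [lt_div_iff₀ hd] at hpp'
    by_contra hcon
    have := mul_nonneg (mul_nonneg hp0.le h1p.le) (sub_nonneg.2 (not_lt.1 hcon))
    linarith
  have hpPlt : pPrime p q < 1 := by
    unfold pPrime
    rw [div_lt_one hd]
    have := mul_pos hq h1p
    linarith
  set p' := pPrime p q with hp'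
  rw [min_eq_left hpp'.le] at hε
  have hber : ∀ A : Set (E → Bool), 0 ≤ berProb (fun _ => p) A ∧ berProb (fun _ => p) A ≤ 1 := by
    intro A
    have hpos := berWeight_pos (fun _ : E => hp0) (fun _ => hp1)
    have hm := massOf_univ_pos hpos
    constructor
    · exact div_nonneg (Finset.sum_nonneg fun ω _ => (hpos ω).le) hm.le
    · refine (div_le_one hm).2 ?_
      exact Finset.sum_le_sum_of_subset_of_nonneg (by intro; simp) fun ω _ _ => (hpos ω).le
  set r : E → ℝ := fun e => p' - εtilde e with hr
  have hr0 : ∀ e, 0 < r e := by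
    intro e
    simp only [hr, hε]
    split_ifs
    · nlinarith [(hber {ω | EndsConn ends α (Etildeᶜ ∩ {e' | ω e' = true}) e}).2]
    · linarith
  have hr1 : ∀ e, r e < 1 := by
    intro e
    simp only [hr, hε]
    split_ifs
    · nlinarith [(hber {ω | EndsConn ends α (Etildeᶜ ∩ {e' | ω e' = true}) e}).1]
    · linarith
  intro A hA
  set h := A.indicator fun _ => (1 : ℝ) with hh
  have hmono : Monotone h := indicator_monotone hA
  let l1 : List E := (Finset.univ.filter (· ∉ Etilde)).toList
  let l2 : List E := (Finset.univ.filter (· ∈ Etilde)).toList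
  have hl1 : ∀ e, e ∈ l1 ↔ e ∉ Etilde := by intro e; simp [l1]
  have hl2 : ∀ e, e ∈ l2 ↔ e ∈ Etilde := by intro e; simp [l2]
  let L : ((E → Bool) → ℝ) → ℝ := fun f => ∑ ω, fkWeight ends α p q ω * f ω
  have hmon2 : ∀ {f : (E → Bool) → ℝ}, Monotone f → ∀ ω e,
      f (Function.update ω e false) ≤ f (Function.update ω e true) := fun hf ω e =>
    hf (update_le_update ω ω e le_rfl (by simp))
  have hdep0 : DepOn Set.univ h := fun ω η hωη => by
    rw [funext fun e => hωη e (Set.mem_univ e)]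
  -- Phase A : resample the edges outside `Etilde`
  have hA1 : L h ≤ L (resampleList r l1 h) := by
    refine resampleList_le (fun e => (hr0 e).le) (fun e => (hr1 e).le) Set.univ L l1 ?_
      hmono hdep0
    intro e he f hf _
    refine sum_le_of_pair e _ _ fun ω => ?_
    have hre : r e = p' := by simp [hr, hε, (hl1 e).1 he]
    simp only [resample, Function.update_idem, hre]
    have h2 := fk_upper ends α p q hp0 hp1 hq hq1 ω e
    have h3 := mul_nonneg (sub_nonneg.2 (hmon2 hf ω e)) (sub_nonneg.2 h2)
    rw [← hp'] at h3
    linarith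
  have hdep1 : DepOn Etilde (resampleList r l1 h) :=
    (resampleList_dep r l1 hdep0).mono (by
      rintro e ⟨_, h2⟩
      by_contra h3
      exact h2 ((hl1 e).2 h3))
  have hmono1 : Monotone (resampleList r l1 h) :=
    resampleList_mono (fun e => (hr0 e).le) (fun e => (hr1 e).le) l1 hmono
  -- Phase B : resample the edges of `Etilde`
  have hA2 : L (resampleList r l1 h) ≤ L (resampleList r l2 (resampleList r l1 h)) := by
    refine resampleList_le (fun e => (hr0 e).le) (fun e => (hr1 e).le) Etilde L l2 ?_
      hmono1 hdep1
    intro e he f hf hfd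
    have heE := (hl2 e).1 he
    set B : Set (E → Bool) := {ω | EndsConn ends α (Etildeᶜ ∩ {e' | ω e' = true}) e} with hB
    have hre : r e = p' - (p' - p) * berProb (fun _ => p) B := by
      simp only [hr, hε, heE, if_true, hB]
    let D : (E → Bool) → ℝ := fun ω =>
      f (Function.update ω e true) - f (Function.update ω e false)
    have hD0 : ∀ ω, 0 ≤ D ω := fun ω => sub_nonneg.2 (hmon2 hf ω e)
    have hBinc : Increasing B := by
      intro ω η hω hωη
      refine endsConn_mono ends α ?_ hω
      rintro e' ⟨h1, h2⟩
      refine ⟨h1, ?_⟩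
      have h3 := hωη e'
      have h2' : ω e' = true := h2
      rw [h2'] at h3
      exact top_le_iff.1 h3
    have hBdep : ∀ ω η : E → Bool, (∀ e' ∈ Etildeᶜ, ω e' = η e') → (ω ∈ B ↔ η ∈ B) := by
      intro ω η hωη
      have : Etildeᶜ ∩ {e' | ω e' = true} = Etildeᶜ ∩ {e' | η e' = true} := by
        ext e'
        constructor
        · rintro ⟨h1, h2⟩; exact ⟨h1, (hωη e' h1).symm.trans h2⟩
        · rintro ⟨h1, h2⟩; exact ⟨h1, (hωη e' h1).trans h2⟩
      simp only [hB, Set.mem_ofPred_eq, this]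
    have hBd : DepOn Etildeᶜ (B.indicator fun _ => (1 : ℝ)) := by
      intro ω η hωη
      simp only [Set.indicator_apply, hBdep ω η hωη]
    have hDd : DepOn (Etildeᶜ)ᶜ D := by
      rw [compl_compl]
      intro ω η hωη
      have : ∀ b, f (Function.update ω e b) = f (Function.update η e b) := fun b => by
        refine hfd _ _ fun e' he' => ?_
        by_cases hh : e' = e
        · subst hh; simp
        · rw [Function.update_of_ne hh, Function.update_of_ne hh]
          exact hωη e' he'
      simp only [D, this]
    have hlow := fk_lower_cond ends α p q hp0 hp1 hq hq1 Etildeᶜ D hD0 hDd B hBinc hBd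
    have hstep : L f ≤ ∑ ω, fkWeight ends α p q ω * (f (Function.update ω e false) +
        D ω * (p' - (p' - p) * B.indicator (fun _ => (1 : ℝ)) ω)) := by
      refine sum_le_of_pair e _ _ fun ω => ?_
      have hBe : ∀ b, (B.indicator (fun _ => (1 : ℝ)) (Function.update ω e b)) =
          B.indicator (fun _ => (1 : ℝ)) ω := fun b => by
        refine hBd _ _ fun e' he' => ?_
        rw [Function.update_of_ne]
        rintro rfl
        exact he' heE
      simp only [D, Function.update_idem, hBe]
      have hDω := sub_nonneg.2 (hmon2 hf ω e)
      by_cases hω : ω ∈ B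
      · rw [Set.indicator_of_mem hω]
        have h2 := fk_conn ends α p q hp0 hp1 ω e (by
          refine endsConn_mono ends α ?_ hω
          rintro e' ⟨h1, h2⟩
          have : e' ≠ e := by rintro rfl; exact h1 heE
          simpa [Function.update_of_ne this] using h2)
        apply le_of_eq
        linear_combination
          (f (Function.update ω e true) - f (Function.update ω e false)) * h2
      · rw [Set.indicator_of_notMem hω]
        have h2 := fk_upper ends α p q hp0 hp1 hq hq1 ω e
        rw [← hp'] at h2
        have h3 := mul_nonneg hDω (sub_nonneg.2 h2)
        linarith
    refine hstep.trans ?_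
    have e1 : ∑ ω, fkWeight ends α p q ω * (f (Function.update ω e false) +
        D ω * (p' - (p' - p) * B.indicator (fun _ => (1 : ℝ)) ω)) =
        ∑ ω, fkWeight ends α p q ω * (f (Function.update ω e false) + D ω * p') -
        (p' - p) * ∑ ω, fkWeight ends α p q ω * (D ω * B.indicator (fun _ => (1 : ℝ)) ω) := by
      rw [Finset.mul_sum, ← Finset.sum_sub_distrib]
      exact Finset.sum_congr rfl fun ω _ => by ring
    have e2 : L (resample (r e) e f) =
        ∑ ω, fkWeight ends α p q ω * (f (Function.update ω e false) + D ω * p') -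
        (p' - p) * (berProb (fun _ => p) B * ∑ ω, fkWeight ends α p q ω * D ω) := by
      rw [Finset.mul_sum, Finset.mul_sum, ← Finset.sum_sub_distrib]
      refine Finset.sum_congr rfl fun ω _ => ?_
      rw [hre]
      simp only [resample, D]
      ring
    rw [e1, e2]
    have := mul_le_mul_of_nonneg_left hlow (sub_nonneg.2 hpp'.le)
    linarith
  -- Conclusion
  have hconst : DepOn ∅ (resampleList r l2 (resampleList r l1 h)) :=
    (resampleList_dep r l2 hdep1).mono (by rintro e ⟨h1, h2⟩; exact h2 ((hl2 e).2 h1))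
  have hval := berProb_eq hr0 hr1 A
    ((ber_resampleList r l1 h).trans (ber_resampleList r l2 _)) hconst
  have hpos := massOf_univ_pos (fkWeight_pos ends α p q hp0 hp1 hq)
  unfold fkProb probOf
  rw [div_le_iff₀ hpos, massOf_eq _ A]
  refine (hA1.trans hA2).trans (le_of_eq ?_)
  unfold massOf
  simp only [Set.mem_univ, Finset.filter_true, L]
  rw [Finset.mul_sum]
  refine Finset.sum_congr rfl fun ω _ => ?_
  rw [hval ω]
  ring
end FKPaper
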